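/- arXiv:2403.11436 — 2 statements merged into one kernel-verified Lean document; each statement's English description precedes it below -/
import Mathlib

section
/- Let q be an odd prime power with q > 16 and k = q − 3. Then u ∈ 𝔽_q^q is a deep hole of TRS_{q-3}(𝔽_q, θ) if and only if either (a) u = u_{a x^{q-3} + g} for some a ∈ 𝔽_q with a ≠ 0 and g ∈ S_{q-3,θ}, or (b) −3 is a nonzero non-square in 𝔽_q (i.e., η(−3) = −1 for the quadratic character η of 𝔽_q) and u = u_{a (x^{q-2} + (3θ)^{-1} x^{q-3}) + g} for some a ∈ 𝔽_q with a ≠ 0 and g ∈ S_{q-3,θ}. -/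
/-!
For `k = q - 3` the code has a three-row parity-check matrix with columns `(1, a, a² - θ a³)`,
`a ∈ F`: the sum `∑ x ^ i` over `F` is `-1` for `i = q - 1` and vanishes for the other exponents
below `2 (q - 1)`, so the syndrome of the word of a polynomial `f` of degree less than `q` is
`(-f_{q-1}, -f_{q-2}, -(f_{q-3} - θ f_{q-4}))`, and it is zero exactly on the code
(`syn_eval`, `mem_TRS_iff`). A word is within distance `2` of the code iff its syndrome is a
combination of two columns (`distTo_le_two_iff`), that is, iff it is zero or lies, as a point of
the projective plane, on the cubic curve `y = x² - θ x³` or on a secant through two distinct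
affine points of it.

* Affine points always lie on the curve or on a secant (`covered_of_ne_zero`). This amounts to
  finding `s, t, u`, not all equal, with prescribed sum and prescribed nonzero product
  (`exists_sum_prod`), a question about rational points on a genus one curve. A Stepanov-type
  argument settles it (`exists_isSquare_eval`): a cubic `h` with `h(0) = 1` takes a square value at
  some nonzero argument as soon as `q ≥ 9`.
* A point at infinity of slope `m` is on a secant unless `m = (3θ)⁻¹` is the slope at the
  inflection point and `-3` is a nonzero non-square (`exists_slope_iff`); this is a question about
  a conic.
* The vertical point at infinity is never on a secant.

Since an affine syndrome is always reached, changing one letter brings every word within distance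
`2`, so the covering radius is `3`, and the deep holes are the words whose syndromes are the
exceptional points above; they are precisely the two families of the theorem.
-/

open Polynomial Finset

/-- The set `S_{k,θ}` of twisted polynomials
`Σ_{i=0}^{k-2} f_i x^i + f_{k-1}(x^{k-1} + θ x^k)`. -/
def Sset (F : Type*) [Field F] (k : ℕ) (θ : F) : Set (Polynomial F) :=
  {p | ∃ f : ℕ → F, p = (∑ i ∈ Finset.range (k - 1), Polynomial.C (f i) * Polynomial.X ^ i)
        + Polynomial.C (f (k - 1)) * (Polynomial.X ^ (k - 1) + Polynomial.C θ * Polynomial.X ^ k)}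

/-- The twisted Reed–Solomon code `TRS_k(A, θ)` for the evaluation sequence `α`. -/
def TRS {F : Type*} [Field F] {n : ℕ} (α : Fin n → F) (k : ℕ) (θ : F) : Set (Fin n → F) :=
  {v | ∃ p ∈ Sset F k θ, v = fun j => p.eval (α j)}

/-- The (Hamming) error distance `d(u, C)` from a word `u` to a code `C`. -/
noncomputable def distTo {F : Type*} [DecidableEq F] {n : ℕ} (u : Fin n → F)
    (C : Set (Fin n → F)) : ℕ :=
  sInf {d | ∃ c ∈ C, hammingDist u c = d}

/-- The covering radius `ρ(C) = max_u d(u, C)` of a code `C`. -/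
noncomputable def covRad {F : Type*} [DecidableEq F] {n : ℕ} (C : Set (Fin n → F)) : ℕ :=
  sSup {d | ∃ u, distTo u C = d}

/-- `u` is a deep hole of `C` if `d(u, C) = ρ(C)`. -/
def IsDeepHole {F : Type*} [DecidableEq F] {n : ℕ} (C : Set (Fin n → F)) (u : Fin n → F) :
    Prop :=
  distTo u C = covRad C

/-- The column vector `c_{r,θ}(a) = (1, a, …, a^{r-2}, a^{r-1} - θ a^r)ᵀ ∈ 𝔽_q^r`. -/
def crv (F : Type*) [Field F] (r : ℕ) (θ a : F) : Fin r → F :=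
  fun i => if (i : ℕ) = r - 1 then a ^ (r - 1) - θ * a ^ r else a ^ (i : ℕ)

/-- The parity-check matrix `H` whose `j`-th column is `c_{r,θ}(α_j)`. -/
def Hmat {F : Type*} [Field F] {n : ℕ} (r : ℕ) (θ : F) (α : Fin n → F) :
    Matrix (Fin r) (Fin n) F :=
  Matrix.of fun i j => crv F r θ (α j) i

/-! ### Rational points on the cubics `s + t + u = c`, `s t u = d` -/

theorem two_ne_zero_of_odd_card {F : Type*} [Field F] [Fintype F]
    (hodd : Odd (Fintype.card F)) : ringChar F ≠ 2 ∧ (2 : F) ≠ 0 := by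
  have h : ringChar F ≠ 2 := fun h => by
    have := FiniteField.even_card_of_char_two h
    rw [Nat.odd_iff] at hodd
    omega
  exact ⟨h, Ring.two_ne_zero h⟩

/-- A polynomial `h` of degree at most `3` with `h(0) = 1` takes a square value at some nonzero
argument. This replaces the Hasse bound for the elliptic curve `y² = h(w)`.

Otherwise `h ^ m`, with `q = 2m + 1`, takes the values of `1 - 2 X ^ (q-1)`, so that
`h ^ m = V + X ^ (q-1) U` with `V = 1 - X B`, `U = X B - 2` and `deg B < m`. The differential
equation `2 h G' + h' G = 0` satisfied by `G = h ^ m` shows that `2 h V' + h' V` is divisible by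
`X ^ (q-2)`; its degree is at most `m + 2 < q - 2`, so its coefficient at `X ^ (q-2)` is zero. That
coefficient is, up to sign, `2 h(0) U(0) = -4`, which is nonzero. -/
theorem exists_isSquare_eval {F : Type*} [Field F] [Fintype F]
    (hodd : Odd (Fintype.card F)) (hq : 9 ≤ Fintype.card F) (h : F[X])
    (hdeg : h.natDegree ≤ 3) (h0 : h.eval 0 = 1) : ∃ w ≠ 0, IsSquare (h.eval w) := by
  classical
  obtain ⟨hchar, h2⟩ := two_ne_zero_of_odd_card hodd
  by_contra! hns
  obtain ⟨m, hm⟩ := hodd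
  have hm2 : Fintype.card F / 2 = m := by omega
  have hcard : ((2 * m + 1 : ℕ) : F) = 0 := by rw [← hm]; exact FiniteField.cast_card_eq_zero F
  push_cast at hcard
  set P : F[X] := X ^ (2 * m + 1) - X with hP
  have hPm : P.Monic := monic_X_pow_sub (by rw [degree_X]; exact_mod_cast (by omega : 1 < 2 * m + 1))
  have hPdeg : P.natDegree = 2 * m + 1 :=
    FiniteField.X_pow_card_sub_X_natDegree_eq F (by omega)
  have hPeval : ∀ w : F, P.eval w = 0 := fun w => by
    have := FiniteField.pow_card w
    rw [hm] at this
    simp [hP, this]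
  set R : F[X] := h ^ m - 1 + 2 * X ^ (2 * m) with hR
  have hReval : ∀ w : F, R.eval w = 0 := fun w => by
    rcases eq_or_ne w 0 with rfl | hw
    · have : m ≠ 0 := by omega
      simp [hR, h0, this]
    · have hz : h.eval w ≠ 0 := fun hz => hns w hw (hz ▸ IsSquare.zero)
      have h1 := FiniteField.pow_dichotomy hchar hz
      have h3 := hns w hw
      rw [FiniteField.isSquare_iff hchar hz] at h3
      have h4 := h1.resolve_left h3
      have h5 := FiniteField.pow_card_sub_one_eq_one w hw
      rw [hm2] at h4
      rw [hm, Nat.add_sub_cancel] at h5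
      simp [hR, h4, h5]
      norm_num
  have hmod : R %ₘ P = 0 := by
    apply Polynomial.eq_zero_of_natDegree_lt_card_of_eval_eq_zero (R %ₘ P)
      (f := (id : F → F)) Function.injective_id
    · intro w
      have := congrArg (Polynomial.eval w) (modByMonic_add_div R P)
      simpa [hPeval, hReval] using this
    · have := natDegree_modByMonic_lt R hPm (by
        intro h; rw [h] at hPdeg; simp at hPdeg)
      omega
  have hRdiv : R = P * (R /ₘ P) := by
    have := modByMonic_add_div R P
    rw [hmod, zero_add] at this
    exact this.symm
  set B := R /ₘ P with hB
  have hRdeg : R.natDegree ≤ 3 * m := by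
    have e1 : (h ^ m).natDegree ≤ 3 * m := by
      refine natDegree_pow_le.trans ?_
      nlinarith
    have e2 : ((2 : F[X]) * X ^ (2 * m)).natDegree ≤ 3 * m := by
      rw [show (2 : F[X]) = C 2 from rfl]
      refine (natDegree_C_mul_X_pow_le _ _).trans (by omega)
    refine (natDegree_add_le _ _).trans (max_le ((natDegree_sub_le _ _).trans ?_) e2)
    simpa using e1
  have hBdeg : B.natDegree + 1 ≤ m := by
    rw [hB, natDegree_divByMonic _ hPm, hPdeg]
    omega
  set V : F[X] := 1 - X * B with hV
  set U : F[X] := X * B - 2 with hU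
  have hG : h ^ m = V + X ^ (2 * m) * U := by
    have : h ^ m = R + 1 - 2 * X ^ (2 * m) := by rw [hR]; ring
    rw [this, hRdiv, hP, hV, hU]
    ring
  have hder : 2 * h * derivative (h ^ m) + derivative h * h ^ m = 0 := by
    obtain ⟨n, rfl⟩ : ∃ n, m = n + 1 := ⟨m - 1, by omega⟩
    rw [derivative_pow_succ]
    have : (C (n : F) + 1) * 2 + 1 = (0 : F[X]) := by
      push_cast at hcard
      rw [← C_0, ← hcard]
      simp only [map_add, map_mul, map_one, map_ofNat]
      ring
    simp only [map_add, map_one]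
    linear_combination (h ^ (n + 1) * derivative h) * this
  set W : F[X] := 2 * h * (X * derivative U - U) + derivative h * (X * U) with hW
  have hkey : 2 * h * derivative V + derivative h * V = - (W * X ^ (2 * m - 1)) := by
    obtain ⟨n, hn⟩ : ∃ n, 2 * m = n + 1 := ⟨2 * m - 1, by omega⟩
    have hn0 : C (n : F) + 1 = (-1 : F[X]) := by
      have : (n : F) + 1 = -1 := by
        have : ((2 * m : ℕ) : F) = ((n + 1 : ℕ) : F) := by rw [hn]
        push_cast at this
        linear_combination hcard - this
      rw [← C_1, ← C_add, this, C_neg, C_1]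
    rw [hG, hn] at hder
    rw [hn, Nat.add_sub_cancel, hW]
    simp only [derivative_mul, derivative_X_pow_succ, map_add, map_one] at hder
    linear_combination hder - 2 * h * X ^ n * U * hn0
  have hVdeg : V.natDegree ≤ m := by
    refine (natDegree_sub_le _ _).trans (max_le (by simp) ?_)
    refine natDegree_mul_le.trans ?_
    have := natDegree_X_le (R := F)
    omega
  have hldeg : (2 * h * derivative V + derivative h * V).natDegree ≤ m + 2 := by
    refine (natDegree_add_le _ _).trans (max_le ?_ ?_)
    · refine natDegree_mul_le.trans ?_
      have e1 : (2 * h).natDegree ≤ 3 := by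
        rw [show (2 : F[X]) = C 2 from rfl]
        exact (natDegree_C_mul_le _ _).trans hdeg
      have := natDegree_derivative_le V
      omega
    · refine natDegree_mul_le.trans ?_
      have := natDegree_derivative_le h
      omega
  have hc := congrArg (fun p => p.coeff (2 * m - 1)) hkey
  simp only [coeff_neg] at hc
  rw [coeff_eq_zero_of_natDegree_lt (by omega), coeff_mul_X_pow', if_pos le_rfl, Nat.sub_self,
    coeff_zero_eq_eval_zero] at hc
  simp [hW, hU, h0] at hc
  exact h2 hc

/-- There are `s, t, u`, not all equal, with prescribed sum `c` and prescribed nonzero product `d`;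
they are arranged so that `s ≠ t`. -/
theorem exists_sum_prod {F : Type*} [Field F] [Fintype F]
    (hodd : Odd (Fintype.card F)) (hq : 9 ≤ Fintype.card F) (c d : F) (hd : d ≠ 0) :
    ∃ s t u : F, s ≠ t ∧ s + t + u = c ∧ s * t * u = d := by
  classical
  obtain ⟨-, h2⟩ := two_ne_zero_of_odd_card hodd
  -- Fixing `s = 1 / w`, the discriminant of the quadratic with roots `t, u` is
  -- `((c w - 1)² - 4 d w³) / w²`.
  obtain ⟨w, hw, y, hy⟩ := exists_isSquare_eval hodd hq
    (C (-4 * d) * X ^ 3 + (C c * X - 1) ^ 2) (by compute_degree) (by simp)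
  simp at hy
  obtain ⟨s, t, u, hsum, hprod⟩ : ∃ s t u : F, s + t + u = c ∧ s * t * u = d := by
    refine ⟨1 / w, ((c - 1 / w) + y / w) / 2, ((c - 1 / w) - y / w) / 2, ?_, ?_⟩
    · field_simp
      ring
    · field_simp
      linear_combination hy
  by_cases hst : s = t
  swap
  · exact ⟨s, t, u, hst, hsum, hprod⟩
  by_cases htu : t = u
  swap
  · exact ⟨t, u, s, htu, by rw [← hsum]; ring, by rw [← hprod]; ring⟩
  -- If `s = t = u`, then `(s, s)` is a singular point of the cubic curve in the `(s, t)`-plane,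
  -- and a line through it meets the curve in one further point.
  subst hst htu
  have hs : s ≠ 0 := by rintro rfl; simp at hprod; exact hd hprod.symm
  by_cases h3 : (3 : F) = 0
  · obtain ⟨m, hm⟩ : ∃ m : F, m ∉ ({0, 1, -1} : Finset F) := by
      by_contra! hall
      have h1 : (Finset.univ : Finset F) ⊆ {0, 1, -1} := fun m _ => hall m
      have h4 := (Finset.card_le_card h1).trans Finset.card_le_three
      rw [Finset.card_univ] at h4
      omega
    simp only [Finset.mem_insert, Finset.mem_singleton, not_or] at hm
    obtain ⟨m0, m1, m2⟩ := hm
    have m1' : m - 1 ≠ 0 := sub_ne_zero.mpr m1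
    have m2' : m + 1 ≠ 0 := fun h => m2 (eq_neg_of_add_eq_zero_left h)
    set x : F := -(s * (m - 1) ^ 2 / (m * (m + 1))) with hx
    have hx0 : x ≠ 0 := neg_ne_zero.mpr (by positivity)
    have hxm : x * (m * (m + 1)) = - (s * (m - 1) ^ 2) := by
      rw [hx]; field_simp
    refine ⟨s + x, s + m * x, s - (1 + m) * x, ?_, ?_, ?_⟩
    · intro h
      have : x * (m - 1) = 0 := by linear_combination -h
      exact mul_ne_zero hx0 m1' this
    · rw [← hsum]; ring
    · rw [← hprod]
      linear_combination -x ^ 2 * hxm - s * x ^ 2 * m * h3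
  · refine ⟨-s / 2, 4 * s, -s / 2, ?_, ?_, ?_⟩
    · intro h
      have : s * 3 * 3 = 0 := by
        field_simp at h
        linear_combination -s * h
      exact mul_ne_zero (mul_ne_zero hs h3) h3 this
    · rw [← hsum]; field_simp; ring
    · rw [← hprod]; field_simp; ring

/-! ### Points on secants of the curve `(1 : a : a² - θ a³)` -/

/-- The vector `(s₀, s₁, s₂)` is a combination of two columns `(1, a, a² - θ a³)` and
`(1, b, b² - θ b³)` of the parity-check matrix, with `a ≠ b`. The coefficients may vanish, so the
zero vector and the multiples of a single column are included. -/
def Covered {F : Type*} [Field F] (θ s₀ s₁ s₂ : F) : Prop :=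
  ∃ a b x y : F, a ≠ b ∧ x + y = s₀ ∧ x * a + y * b = s₁ ∧
    x * (a ^ 2 - θ * a ^ 3) + y * (b ^ 2 - θ * b ^ 3) = s₂

/-- Every affine point `(x₀, y₀)` lies on a secant of the curve `y = x² - θ x³` or on the curve.
With abscissas `x₀ + s` and `x₀ + t`, collinearity reads `θ s t u = x₀² - θ x₀³ - y₀`, where `u`
is defined by `θ (s + t + u) = 1 - 3 θ x₀`. -/
theorem covered_of_ne_zero {F : Type*} [Field F] [Fintype F]
    (hodd : Odd (Fintype.card F)) (hq : 9 ≤ Fintype.card F) {θ : F} (hθ : θ ≠ 0)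
    {s₀ : F} (h₀ : s₀ ≠ 0) (s₁ s₂ : F) : Covered θ s₀ s₁ s₂ := by
  set x₀ := s₁ / s₀ with hx₀
  have hs₁ : s₁ = s₀ * x₀ := by rw [hx₀]; field_simp
  set d := (x₀ ^ 2 - θ * x₀ ^ 3 - s₂ / s₀) / θ with hd
  have hs₂ : s₂ = s₀ * (x₀ ^ 2 - θ * x₀ ^ 3 - θ * d) := by rw [hd]; field_simp; ring
  -- `d = 0` means that the point lies on the curve.
  by_cases hd0 : d = 0
  · refine ⟨x₀, x₀ + 1, s₀, 0, by simp, by simp, ?_, ?_⟩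
    · rw [hs₁]; ring
    · rw [hs₂, hd0]; ring
  obtain ⟨s, t, u, hst, hsum, hprod⟩ :=
    exists_sum_prod hodd hq ((1 - 3 * θ * x₀) / θ) d hd0
  have hsum' : θ * (s + t + u) = 1 - 3 * θ * x₀ := by rw [hsum]; field_simp
  have hts : t - s ≠ 0 := sub_ne_zero.mpr (Ne.symm hst)
  refine ⟨x₀ + s, x₀ + t, s₀ * (t / (t - s)), -(s₀ * (s / (t - s))), by simpa using hst, ?_, ?_, ?_⟩
  · field_simp
    ring
  · rw [hs₁]
    field_simp
    ring
  · rw [hs₂, ← hprod]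
    field_simp
    linear_combination (s * t * (t - s)) * hsum'

/-- In characteristic other than `2` and `3`, the conic `δ² + 3 τ² = K` with `K ≠ 0` has a rational
point with `δ ≠ 0`. -/
theorem exists_norm_form {F : Type*} [Field F] [Fintype F]
    (hodd : Odd (Fintype.card F)) (h3 : (3 : F) ≠ 0) {K : F} (hK : K ≠ 0) :
    ∃ δ τ : F, δ ≠ 0 ∧ δ ^ 2 + 3 * τ ^ 2 = K := by
  obtain ⟨-, h2⟩ := two_ne_zero_of_odd_card hodd
  obtain ⟨δ, τ, h⟩ := FiniteField.exists_root_sum_quadratic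
    (f := (X ^ 2 - C K : F[X])) (g := C 3 * X ^ 2) (degree_X_pow_sub_C (by norm_num) _)
    (degree_C_mul_X_pow 2 h3) (Nat.odd_iff.mp hodd)
  simp at h
  by_cases hδ : δ = 0
  -- Otherwise the line of slope `1` through the point `(0, -τ)` meets the conic again
  -- in `(3τ/2, τ/2)`.
  · subst hδ
    have hτ : τ ≠ 0 := by
      rintro rfl
      apply hK
      linear_combination -h
    refine ⟨3 / 2 * τ, τ / 2, mul_ne_zero (div_ne_zero h3 h2) hτ, ?_⟩
    field_simp
    linear_combination 4 * h
  · exact ⟨δ, τ, hδ, by linear_combination h⟩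

/-- The slope of the chord of `y = x² - θ x³` over `a ≠ b` is `a + b - θ (a² + a b + b²)`. It takes
every value, except that the inflectional slope `(3θ)⁻¹` is missed when `-3` is a nonzero
non-square. Outside characteristic `3`, with `δ = a - b` and `τ = a + b - 2 / (3θ)`, slope `m`
amounts to `δ² + 3 τ² = 4 / (3θ²) - 4 m / θ`, whose right-hand side vanishes exactly for
`m = (3θ)⁻¹`. -/
theorem exists_slope_iff {F : Type*} [Field F] [Fintype F]
    (hodd : Odd (Fintype.card F)) {θ : F} (hθ : θ ≠ 0) (m : F) :
    (∃ a b : F, a ≠ b ∧ a + b - θ * (a ^ 2 + a * b + b ^ 2) = m) ↔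
      ¬ (((-3 : F) ≠ 0 ∧ ¬ IsSquare (-3 : F)) ∧ m = (3 * θ)⁻¹) := by
  obtain ⟨-, h2⟩ := two_ne_zero_of_odd_card hodd
  -- In characteristic `3` the equation becomes linear in `a + b` once `a - b = 1` is fixed.
  by_cases h3 : (3 : F) = 0
  · simp only [neg_ne_zero, h3, ne_eq, not_true_eq_false, false_and, not_false_eq_true, iff_true]
    refine ⟨(m + θ + 1) / 2, (m + θ - 1) / 2, ?_, ?_⟩
    · intro h
      field_simp at h
      exact h2 (by linear_combination h)
    · field_simp
      linear_combination (θ - θ * (m + θ) ^ 2) * h3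
  have h4 : (4 : F) ≠ 0 := by
    rw [show (4 : F) = 2 * 2 by norm_num]
    exact mul_ne_zero h2 h2
  constructor
  · rintro ⟨a, b, hab, h⟩ ⟨⟨-, hsq⟩, rfl⟩
    have hab' : a - b ≠ 0 := sub_ne_zero.mpr hab
    set τ := a + b - 2 / (3 * θ) with hτ
    have key : (a - b) ^ 2 = -3 * τ ^ 2 := by
      rw [hτ]
      field_simp at h ⊢
      linear_combination (-4) * h
    have hτ0 : τ ≠ 0 := by
      intro h0
      rw [h0] at key
      exact hab' (by simpa using key)
    apply hsq
    refine ⟨(a - b) / τ, ?_⟩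
    field_simp
    linear_combination -key
  · intro h
    obtain ⟨δ, τ, hδ, hδτ⟩ : ∃ δ τ : F, δ ≠ 0 ∧
        δ ^ 2 + 3 * τ ^ 2 = 4 / (3 * θ ^ 2) - 4 * m / θ := by
      by_cases hK : 4 / (3 * θ ^ 2) - 4 * m / θ = 0
      · have hm : m = (3 * θ)⁻¹ := by
          field_simp at hK ⊢
          have : (4 : F) * (m * 3 * θ - 1) = 0 := by
            linear_combination -hK
          have := (mul_eq_zero.mp this).resolve_left h4
          linear_combination this
        have h5 : IsSquare (-3 : F) := by
          by_contra h5
          exact h ⟨⟨neg_ne_zero.mpr h3, h5⟩, hm⟩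
        obtain ⟨e, he⟩ := h5
        refine ⟨e, 1, ?_, ?_⟩
        · rintro rfl
          exact h3 (by linear_combination -he)
        · rw [hK]
          linear_combination -he
      · exact exists_norm_form hodd h3 hK
    refine ⟨(τ + 2 / (3 * θ) + δ) / 2, (τ + 2 / (3 * θ) - δ) / 2, ?_, ?_⟩
    · intro he
      have : δ = 0 := by
        field_simp at he
        have : 2 * δ * 3 * θ = 0 := by linear_combination he
        simpa [h2, h3, hθ] using this
      exact hδ this
    · field_simp at hδτ ⊢
      linear_combination (-3 : F) * hδτ

/-- The vectors off all secants: the point at infinity of the vertical lines, and the point at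
infinity of the inflectional tangent if `-3` is a nonzero non-square. -/
theorem not_covered_iff {F : Type*} [Field F] [Fintype F]
    (hodd : Odd (Fintype.card F)) (hq : 9 ≤ Fintype.card F) {θ : F} (hθ : θ ≠ 0)
    (s₀ s₁ s₂ : F) : ¬ Covered θ s₀ s₁ s₂ ↔
      (s₀ = 0 ∧ s₁ = 0 ∧ s₂ ≠ 0) ∨
      (((-3 : F) ≠ 0 ∧ ¬ IsSquare (-3 : F)) ∧ s₀ = 0 ∧ s₁ ≠ 0 ∧ s₂ = s₁ * (3 * θ)⁻¹) := by
  by_cases h₀ : s₀ = 0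
  swap
  · simp [h₀, covered_of_ne_zero hodd hq hθ h₀ s₁ s₂]
  subst h₀
  by_cases h₁ : s₁ = 0
  · subst h₁
    have : Covered θ 0 0 s₂ ↔ s₂ = 0 := by
      constructor
      · rintro ⟨a, b, x, y, hab, e0, e1, e2⟩
        have hx : x * (a - b) = 0 := by linear_combination e1 - b * e0
        have hx := (mul_eq_zero.mp hx).resolve_right (sub_ne_zero.mpr hab)
        subst hx
        have hy : y = 0 := by simpa using e0
        subst hy
        linear_combination -e2
      · rintro rfl
        exact ⟨0, 1, 0, 0, by simp, by simp, by simp, by simp⟩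
    simp [this]
  · have : Covered θ 0 s₁ s₂ ↔
        ∃ a b : F, a ≠ b ∧ a + b - θ * (a ^ 2 + a * b + b ^ 2) = s₂ / s₁ := by
      constructor
      · rintro ⟨a, b, x, y, hab, e0, e1, e2⟩
        refine ⟨a, b, hab, ?_⟩
        obtain rfl : y = -x := by linear_combination e0
        rw [eq_div_iff h₁, ← e1, ← e2]
        ring
      · rintro ⟨a, b, hab, h⟩
        have hab' : a - b ≠ 0 := sub_ne_zero.mpr hab
        refine ⟨a, b, s₁ / (a - b), -(s₁ / (a - b)), hab, by ring, by field_simp; ring, ?_⟩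
        have hs : s₂ = s₁ * (a + b - θ * (a ^ 2 + a * b + b ^ 2)) := by rw [h]; field_simp
        rw [hs]
        field_simp
        ring
    rw [this, exists_slope_iff hodd hθ, not_not, div_eq_iff h₁]
    simp [h₁, mul_comm]

/-! ### Syndromes of words -/

theorem sum_pow_of_lt {F : Type*} [Field F] [Fintype F] {i : ℕ}
    (hi : i < 2 * (Fintype.card F - 1)) :
    ∑ x : F, x ^ i = if i = Fintype.card F - 1 then -1 else 0 := by
  classical
  rcases lt_trichotomy i (Fintype.card F - 1) with h | h | h
  · rw [if_neg h.ne, FiniteField.sum_pow_lt_card_sub_one F i h]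
  · rw [if_pos h, h]
    have hq : Fintype.card F - 1 ≠ 0 := by omega
    have : ∀ x : F, x ^ (Fintype.card F - 1) = 1 - if x = 0 then 1 else 0 := fun x => by
      by_cases hx : x = 0
      · simp [hx, hq]
      · simp [hx, FiniteField.pow_card_sub_one_eq_one x hx]
    simp [this]
  · rw [if_neg h.ne']
    obtain ⟨j, rfl⟩ : ∃ j, i = Fintype.card F - 1 + (j + 1) :=
      ⟨i - (Fintype.card F - 1) - 1, by omega⟩
    rw [← FiniteField.sum_pow_lt_card_sub_one F (j + 1) (by omega)]
    refine Finset.sum_congr rfl fun x _ => ?_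
    by_cases hx : x = 0
    · simp [hx]
    · rw [pow_add, FiniteField.pow_card_sub_one_eq_one x hx, one_mul]

/-- Power sums against a polynomial of degree less than `q` read off its four top coefficients:
only the exponent `q - 1` contributes to the sum. -/
theorem sum_eval_mul_pow {F : Type*} [Field F] [Fintype F] (hq : 9 ≤ Fintype.card F)
    {p : F[X]} (hp : p.natDegree < Fintype.card F) {i : ℕ} (hi : i ≤ 3) :
    ∑ x : F, p.eval x * x ^ i = -p.coeff (Fintype.card F - 1 - i) := by
  simp_rw [eval_eq_sum_range' hp, Finset.sum_mul, mul_assoc, ← pow_add]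
  rw [Finset.sum_comm]
  simp_rw [← Finset.mul_sum]
  rw [Finset.sum_congr rfl (g := fun n => if n = Fintype.card F - 1 - i then -p.coeff n else 0)]
  · rw [Finset.sum_ite_eq', if_pos (Finset.mem_range.mpr (by omega))]
  · intro n hn
    rw [Finset.mem_range] at hn
    rw [sum_pow_of_lt (by omega)]
    by_cases h : n = Fintype.card F - 1 - i
    · rw [if_pos (by omega), if_pos h]; ring
    · rw [if_neg (by omega), if_neg h]; ring

theorem mem_Sset_iff {F : Type*} [Field F] {k : ℕ} (hk : 1 ≤ k) (θ : F) (p : F[X]) :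
    p ∈ Sset F k θ ↔ p.natDegree ≤ k ∧ p.coeff k = θ * p.coeff (k - 1) := by
  obtain ⟨n, rfl⟩ : ∃ n, k = n + 1 := ⟨k - 1, by omega⟩
  simp only [Sset, Set.mem_ofPred_eq, Nat.add_sub_cancel]
  constructor
  · rintro ⟨f, rfl⟩
    have hs : (∑ i ∈ Finset.range n, C (f i) * X ^ i : F[X]).degree < n := by
      refine (degree_sum_le _ _).trans_lt ((Finset.sup_lt_iff (WithBot.bot_lt_coe n)).mpr ?_)
      intro i hi
      exact (degree_C_mul_X_pow_le _ _).trans_lt (Nat.cast_lt.mpr (Finset.mem_range.mp hi))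
    refine ⟨?_, ?_⟩
    · refine (natDegree_add_le _ _).trans (max_le ?_ ?_)
      · exact (natDegree_le_of_degree_le hs.le).trans (by omega)
      · compute_degree
    · rw [coeff_add, coeff_add, coeff_eq_zero_of_degree_lt hs,
        coeff_eq_zero_of_degree_lt (hs.trans (by exact_mod_cast n.lt_succ_self))]
      simp [coeff_X_pow]
      ring
  · rintro ⟨hd, hc⟩
    refine ⟨p.coeff, ?_⟩
    conv_lhs => rw [p.as_sum_range_C_mul_X_pow' (Nat.lt_succ_of_le hd)]
    rw [Finset.sum_range_succ, Finset.sum_range_succ, hc, C_mul]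
    ring

/-- The syndrome `H v` of a word `v` with respect to the three-row parity-check matrix of
`TRS_{q-3}`, whose column at `a` is `(1, a, a² - θ a³)`. -/
def syn {F : Type*} [Field F] {n : ℕ} (α : Fin n → F) (θ : F) : (Fin n → F) →ₗ[F] F × F × F where
  toFun v := (∑ j, v j, ∑ j, v j * α j, ∑ j, v j * (α j ^ 2 - θ * α j ^ 3))
  map_add' v w := by simp [add_mul, Finset.sum_add_distrib]
  map_smul' c v := by simp [mul_assoc, Finset.mul_sum]

theorem syn_eval {F : Type*} [Field F] [Fintype F] {q : ℕ} (hq : q = Fintype.card F)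
    (hq9 : 9 ≤ q) (θ : F) {α : Fin q → F} (hα : Function.Bijective α) {p : F[X]}
    (hp : p.natDegree < q) :
    syn α θ (fun j => p.eval (α j)) =
      (-p.coeff (q - 1), -p.coeff (q - 2), -(p.coeff (q - 3) - θ * p.coeff (q - 4))) := by
  subst hq
  have key := fun (i : ℕ) (hi : i ≤ 3) => sum_eval_mul_pow hq9 hp hi
  have e0 := key 0 (by norm_num)
  have e1 := key 1 (by norm_num)
  have e2 := key 2 (by norm_num)
  have e3 := key 3 (by norm_num)
  simp only [pow_zero, mul_one, pow_one, Nat.sub_sub] at e0 e1 e2 e3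
  have tr := fun g : F → F => Function.Bijective.sum_comp hα g
  simp only [syn, LinearMap.coe_mk, AddHom.coe_mk, Prod.mk.injEq]
  refine ⟨(tr fun x => p.eval x).trans e0, (tr fun x => p.eval x * x).trans e1,
    (tr fun x => p.eval x * (x ^ 2 - θ * x ^ 3)).trans ?_⟩
  rw [show -(p.coeff (Fintype.card F - 3) - θ * p.coeff (Fintype.card F - 4)) =
    -p.coeff (Fintype.card F - 3) - θ * -p.coeff (Fintype.card F - 4) by ring, ← e2, ← e3,
    Finset.mul_sum, ← Finset.sum_sub_distrib]
  exact Finset.sum_congr rfl fun x _ => by ring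

theorem exists_eval_eq {F : Type*} [Field F] {q : ℕ} (hq0 : 0 < q)
    {α : Fin q → F} (hα : Function.Bijective α) (v : Fin q → F) :
    ∃ p : F[X], p.natDegree < q ∧ v = fun j => p.eval (α j) := by
  have hd := Lagrange.degree_interpolate_lt (s := Finset.univ) v hα.1.injOn
  rw [Finset.card_univ, Fintype.card_fin] at hd
  refine ⟨Lagrange.interpolate Finset.univ α v, ?_, ?_⟩
  · by_cases h : Lagrange.interpolate Finset.univ α v = 0
    · simpa [h] using hq0
    · exact (natDegree_lt_iff_degree_lt h).mpr hd
  funext j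
  rw [Lagrange.eval_interpolate_at_node _ hα.1.injOn (Finset.mem_univ j)]

theorem mem_TRS_iff {F : Type*} [Field F] [Fintype F] {q : ℕ} (hq : q = Fintype.card F)
    (hq9 : 9 ≤ q) (θ : F) {α : Fin q → F} (hα : Function.Bijective α) (v : Fin q → F) :
    v ∈ TRS α (q - 3) θ ↔ syn α θ v = 0 := by
  constructor
  · rintro ⟨p, hp, rfl⟩
    rw [mem_Sset_iff (by omega)] at hp
    obtain ⟨hd, hc⟩ := hp
    rw [syn_eval hq hq9 θ hα (by omega), hc, coeff_eq_zero_of_natDegree_lt (by omega),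
      coeff_eq_zero_of_natDegree_lt (by omega), Nat.sub_sub]
    simp
  · intro h
    obtain ⟨p, hp, rfl⟩ := exists_eval_eq (by omega) hα v
    rw [syn_eval hq hq9 θ hα hp] at h
    simp only [Prod.mk_eq_zero, neg_eq_zero, sub_eq_zero] at h
    obtain ⟨h1, h2, h3⟩ := h
    refine ⟨p, (mem_Sset_iff (by omega) θ p).mpr ⟨?_, by rw [h3, Nat.sub_sub]⟩, rfl⟩
    rw [natDegree_le_iff_coeff_eq_zero]
    intro N hN
    rcases lt_or_ge N q with hNq | hNq
    · rcases (by omega : N = q - 1 ∨ N = q - 2) with rfl | rfl <;> assumption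
    · exact coeff_eq_zero_of_natDegree_lt (by omega)

/-- The cosets `a w + TRS` occurring in the classification are described by their syndrome. -/
theorem exists_add_Sset_iff {F : Type*} [Field F] [Fintype F] {q : ℕ} (hq : q = Fintype.card F)
    (hq9 : 9 ≤ q) (θ : F) {α : Fin q → F} (hα : Function.Bijective α) (u : Fin q → F)
    (w : F[X]) (a : F) :
    (∃ g ∈ Sset F (q - 3) θ, u = fun j => (C a * w + g).eval (α j)) ↔
      syn α θ u = a • syn α θ (fun j => w.eval (α j)) := by
  rw [← sub_eq_zero, ← map_smul, ← map_sub, ← mem_TRS_iff hq hq9 θ hα]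
  refine exists_congr fun g => and_congr_right fun _ => ?_
  simp only [funext_iff, Pi.add_apply, Pi.smul_apply, smul_eq_mul, eval_add, eval_mul, eval_C,
    sub_eq_iff_eq_add']

theorem syn_single {F : Type*} [Field F] {n : ℕ} (α : Fin n → F) (θ : F) (i : Fin n) (x : F) :
    syn α θ (Pi.single i x) = (x, x * α i, x * (α i ^ 2 - θ * α i ^ 3)) := by
  simp only [syn, LinearMap.coe_mk, AddHom.coe_mk, Pi.single_apply, ite_mul, zero_mul,
    Finset.sum_ite_eq', Finset.mem_univ, if_true]

/-! ### Distances in terms of syndromes -/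

theorem exists_hammingDist_eq_distTo {F : Type*} [DecidableEq F] {n : ℕ} (u : Fin n → F)
    {C : Set (Fin n → F)} (hC : C.Nonempty) : ∃ c ∈ C, hammingDist u c = distTo u C :=
  Nat.sInf_mem (s := {d | ∃ c ∈ C, hammingDist u c = d})
    (hC.elim fun c hc => ⟨_, c, hc, rfl⟩)

theorem distTo_le {F : Type*} [DecidableEq F] {n : ℕ} (u : Fin n → F)
    {C : Set (Fin n → F)} {c : Fin n → F} (hc : c ∈ C) : distTo u C ≤ hammingDist u c :=
  Nat.sInf_le ⟨c, hc, rfl⟩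

theorem hammingDist_sub_le {F : Type*} [Field F] [DecidableEq F] {n : ℕ} (u e : Fin n → F)
    (T : Finset (Fin n)) (he : ∀ j ∉ T, e j = 0) : hammingDist u (u - e) ≤ T.card := by
  refine Finset.card_le_card fun j hj => ?_
  by_contra hjT
  simp [he j hjT] at hj

theorem distTo_le_two_iff {F : Type*} [Field F] [Fintype F] [DecidableEq F] {q : ℕ}
    (hq : q = Fintype.card F) (hq9 : 9 ≤ q) (θ : F) {α : Fin q → F}
    (hα : Function.Bijective α) (u : Fin q → F) :
    distTo u (TRS α (q - 3) θ) ≤ 2 ↔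
      Covered θ (syn α θ u).1 (syn α θ u).2.1 (syn α θ u).2.2 := by
  constructor
  · intro h
    obtain ⟨c, hc, hcd⟩ := exists_hammingDist_eq_distTo u (C := TRS α (q - 3) θ)
      ⟨0, (mem_TRS_iff hq hq9 θ hα 0).mpr (map_zero _)⟩
    rw [mem_TRS_iff hq hq9 θ hα] at hc
    obtain ⟨T, hT, -, hT2⟩ := Finset.exists_subsuperset_card_eq
      (Finset.subset_univ (Finset.univ.filter fun j => u j ≠ c j)) (hcd.trans_le h)
      (by rw [Finset.card_univ, Fintype.card_fin]; omega)
    obtain ⟨i, j, hij, rfl⟩ := Finset.card_eq_two.mp hT2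
    have hu : u = c + Pi.single i (u i - c i) + Pi.single j (u j - c j) := by
      funext l
      by_cases hl : u l = c l
      · by_cases hi : l = i
        · subst hi; simp [hij, hl]
        · by_cases hj : l = j
          · subst hj; simp [hi, hl]
          · simp [hi, hj, hl]
      · have : l ∈ ({i, j} : Finset (Fin q)) := hT (by simp [hl])
        rcases Finset.mem_insert.mp this with rfl | h'
        · simp [hij]
        · rw [Finset.mem_singleton] at h'
          subst h'
          simp [hij.symm]
    have hs := congrArg (syn α θ) hu
    rw [map_add, map_add, hc, zero_add, syn_single, syn_single] at hs
    rw [hs]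
    exact ⟨α i, α j, _, _, hα.1.ne hij, rfl, rfl, rfl⟩
  · rintro ⟨a, b, x, y, -, e0, e1, e2⟩
    obtain ⟨i, rfl⟩ := hα.2 a
    obtain ⟨j, rfl⟩ := hα.2 b
    set e : Fin q → F := Pi.single i x + Pi.single j y with he
    have hmem : u - e ∈ TRS α (q - 3) θ := by
      rw [mem_TRS_iff hq hq9 θ hα, map_sub, sub_eq_zero, he, map_add, syn_single, syn_single]
      exact Prod.ext e0.symm (Prod.ext e1.symm e2.symm)
    refine (distTo_le u hmem).trans ((hammingDist_sub_le u e {i, j} ?_).trans Finset.card_le_two)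
    intro l hl
    simp only [Finset.mem_insert, Finset.mem_singleton, not_or] at hl
    simp [he, hl.1, hl.2]

/-- A word at distance more than `2` has a syndrome with vanishing first coordinate; changing one
letter makes that coordinate nonzero, hence brings the word within distance `2`. -/
theorem distTo_le_three {F : Type*} [Field F] [Fintype F] [DecidableEq F] {q : ℕ}
    (hq : q = Fintype.card F) (hodd : Odd q) (hq9 : 9 ≤ q) {θ : F} (hθ : θ ≠ 0) {α : Fin q → F}
    (hα : Function.Bijective α) (u : Fin q → F) :
    distTo u (TRS α (q - 3) θ) ≤ 3 := by
  by_cases h : distTo u (TRS α (q - 3) θ) ≤ 2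
  · omega
  have h₀ : (syn α θ u).1 = 0 := by
    by_contra h₀
    exact h ((distTo_le_two_iff hq hq9 θ hα u).mpr
      (covered_of_ne_zero (hq ▸ hodd) (hq ▸ hq9) hθ h₀ _ _))
  set i : Fin q := ⟨0, by omega⟩
  set e : Fin q → F := Pi.single i 1 with he
  have h1 : distTo (u - e) (TRS α (q - 3) θ) ≤ 2 := by
    rw [distTo_le_two_iff hq hq9 θ hα]
    refine covered_of_ne_zero (hq ▸ hodd) (hq ▸ hq9) hθ ?_ _ _
    rw [map_sub, Prod.fst_sub, h₀, he, syn_single]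
    simp
  obtain ⟨c, hc, hcd⟩ := exists_hammingDist_eq_distTo (u - e) (C := TRS α (q - 3) θ)
    ⟨0, (mem_TRS_iff hq hq9 θ hα 0).mpr (map_zero _)⟩
  have h2 : hammingDist u (u - e) ≤ 1 := hammingDist_sub_le u e {i} fun j hj => by
    rw [Finset.mem_singleton] at hj
    simp [he, hj]
  have := distTo_le u hc
  have := hammingDist_triangle u (u - e) c
  omega

theorem syn_monomial {F : Type*} [Field F] [Fintype F] {q : ℕ} (hq : q = Fintype.card F)
    (hq9 : 9 ≤ q) (θ : F) {α : Fin q → F} (hα : Function.Bijective α) :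
    syn α θ (fun j => (X ^ (q - 3) : F[X]).eval (α j)) = (0, 0, -1) := by
  rw [syn_eval hq hq9 θ hα (by rw [natDegree_X_pow]; omega)]
  simp only [coeff_X_pow]
  rw [if_neg (by omega), if_neg (by omega), if_pos trivial, if_neg (by omega)]
  simp

theorem syn_binomial {F : Type*} [Field F] [Fintype F] {q : ℕ} (hq : q = Fintype.card F)
    (hq9 : 9 ≤ q) (θ c : F) {α : Fin q → F} (hα : Function.Bijective α) :
    syn α θ (fun j => (X ^ (q - 2) + C c * X ^ (q - 3) : F[X]).eval (α j)) = (0, -1, -c) := by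
  rw [syn_eval hq hq9 θ hα]
  · simp only [coeff_add, coeff_C_mul, coeff_X_pow]
    rw [if_neg (by omega), if_neg (by omega), if_pos trivial, if_neg (by omega), if_neg (by omega),
      if_neg (by omega), if_neg (by omega)]
    simp
  · refine (natDegree_add_le _ _).trans_lt (max_lt ?_ ?_)
    · rw [natDegree_X_pow]; omega
    · exact (natDegree_C_mul_X_pow_le _ _).trans_lt (by omega)

theorem covRad_eq_three {F : Type*} [Field F] [Fintype F] [DecidableEq F] {q : ℕ}
    (hq : q = Fintype.card F) (hodd : Odd q) (hq9 : 9 ≤ q) {θ : F} (hθ : θ ≠ 0) {α : Fin q → F}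
    (hα : Function.Bijective α) : covRad (TRS α (q - 3) θ) = 3 := by
  set w : Fin q → F := fun j => (X ^ (q - 3) : F[X]).eval (α j) with hw
  have hnot : ¬ distTo w (TRS α (q - 3) θ) ≤ 2 := by
    rw [distTo_le_two_iff hq hq9 θ hα, hw, syn_monomial hq hq9 θ hα,
      not_covered_iff (hq ▸ hodd) (hq ▸ hq9) hθ]
    simp
  have hle := distTo_le_three hq hodd hq9 hθ hα w
  refine IsGreatest.csSup_eq ⟨⟨w, by omega⟩, ?_⟩
  rintro _ ⟨u, rfl⟩
  exact distTo_le_three hq hodd hq9 hθ hα u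

/-! ### Classification of the deep holes -/

/-- Let `q` be odd, `q > 16`, `k = q - 3`. Then `u ∈ 𝔽_q^q` is a deep hole
of `TRS_{q-3}(𝔽_q, θ)` iff either (a) `u = u_{a x^{q-3} + g}` with `a ≠ 0`, `g ∈ S_{q-3,θ}`,
or (b) `-3` is a nonzero non-square in `𝔽_q` and `u = u_{a (x^{q-2} + (3θ)⁻¹ x^{q-3}) + g}`
with `a ≠ 0`, `g ∈ S_{q-3,θ}`. -/
theorem deep_holes_odd_k_eq_q_sub_three {F : Type*} [Field F] [Fintype F] [DecidableEq F]
    (q : ℕ) (hq : q = Fintype.card F) (hodd : Odd q) (hq16 : 16 < q)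
    (θ : F) (hθ : θ ≠ 0) (α : Fin q → F) (hα : Function.Bijective α) (u : Fin q → F) :
    IsDeepHole (TRS α (q - 3) θ) u ↔
      ((∃ a : F, a ≠ 0 ∧ ∃ g ∈ Sset F (q - 3) θ,
          u = fun j => (Polynomial.C a * Polynomial.X ^ (q - 3) + g).eval (α j)) ∨
        (((-3 : F) ≠ 0 ∧ ¬ IsSquare (-3 : F)) ∧
          ∃ a : F, a ≠ 0 ∧ ∃ g ∈ Sset F (q - 3) θ,
            u = fun j => (Polynomial.C a *
                (Polynomial.X ^ (q - 2) + Polynomial.C (3 * θ)⁻¹ * Polynomial.X ^ (q - 3))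
              + g).eval (α j))) := by
  have hq9 : 9 ≤ q := by omega
  have hdeep : IsDeepHole (TRS α (q - 3) θ) u ↔
      ¬ Covered θ (syn α θ u).1 (syn α θ u).2.1 (syn α θ u).2.2 := by
    rw [← distTo_le_two_iff hq hq9 θ hα, IsDeepHole, covRad_eq_three hq hodd hq9 hθ hα]
    have := distTo_le_three hq hodd hq9 hθ hα u
    omega
  simp_rw [hdeep, not_covered_iff (hq ▸ hodd) (hq ▸ hq9) hθ, exists_add_Sset_iff hq hq9 θ hα,
    syn_monomial hq hq9 θ hα, syn_binomial hq hq9 θ _ hα]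
  generalize syn α θ u = s
  obtain ⟨s₀, s₁, s₂⟩ := s
  simp only [Prod.smul_mk, smul_eq_mul, mul_zero, mul_neg, mul_one, Prod.mk.injEq]
  refine or_congr ⟨?_, ?_⟩ (and_congr_right fun _ => ⟨?_, ?_⟩)
  · rintro ⟨h0, h1, h2⟩
    exact ⟨-s₂, neg_ne_zero.mpr h2, h0, h1, (neg_neg _).symm⟩
  · rintro ⟨a, ha, h0, h1, rfl⟩
    exact ⟨h0, h1, neg_ne_zero.mpr ha⟩
  · rintro ⟨h0, h1, h2⟩
    exact ⟨-s₁, neg_ne_zero.mpr h1, h0, (neg_neg _).symm, by rw [h2]; ring⟩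
  · rintro ⟨a, ha, h0, rfl, rfl⟩
    exact ⟨h0, neg_ne_zero.mpr ha, by ring⟩
end

section
/- Let q = 2^m and let a ∈ 𝔽_q with a ≠ 0. Let N = |{(X, Y) ∈ 𝔽_q × 𝔽_q : X·Y·(X + Y) = a}|. Then: (i) if m is odd, N = q − 2; (ii) if m ≡ 2 (mod 4) and a is a cube in 𝔽_q^* (i.e., a = c^3 for some c ∈ 𝔽_q^*), then N = q − 2 + 2·2^{m/2}; (iii) if m ≡ 0 (mod 4) and a is not a cube in 𝔽_q^*, then N = q − 2 + 2^{m/2}. -/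
/-!
Write `χ(c) = 1` if `y² + y = c` has a solution and `χ(c) = -1` otherwise. In characteristic two the
image of `y ↦ y² + y` is a subgroup of index two, so `χ` is a nontrivial additive character, invariant
under squaring, and `y² + y = c` has exactly `1 + χ(c)` solutions. Substituting `Y = X u` turns the
equation into `u² + u = a / X³`, which gives `N = q - 2 + S` with `S = ∑ x, χ(a x³)`
(`count_add_two`).

For odd `m` cubing is bijective, so `S = ∑ χ = 0`. For even `m`, expanding `S²` along `y = x + w`
leaves only the `w` for which `x ↦ χ(a x² w + a x w²)` is trivial, that is `w = 0` or `a w³ = 1`;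
hence `S² = q (1 + 3)` or `S² = q` according as `a` is a cube or not (`cubicSum_sq`). The sign of `S`
comes from `S ≡ 1 (mod 3)`, which holds because nonzero cubes have exactly three cube roots
(`cubicSum_mod_three`).
-/

open Finset

namespace CubicCount

variable {F : Type*} [Field F]

/-! ### The quadratic additive character -/

/-- The Artin–Schreier map `y ↦ y² + y`, additive in characteristic two. -/
def artinSchreier (F : Type*) [Field F] [CharP F 2] : F →+ F where
  toFun y := y ^ 2 + y
  map_zero' := by simp
  map_add' x y := by rw [CharTwo.add_sq]; ring

lemma artinSchreier_apply [CharP F 2] (y : F) : artinSchreier F y = y ^ 2 + y := rfl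

lemma eq_or_eq_add_one [CharP F 2] {x y : F} (h : x ^ 2 + x = y ^ 2 + y) :
    x = y ∨ x = y + 1 := by
  have h2 : (2 : F) = 0 := CharTwo.two_eq_zero
  have : (x - y) * (x - (y + 1)) = 0 := by linear_combination h + (y - x * y - x + y ^ 2) * h2
  rcases mul_eq_zero.1 this with h | h
  · exact Or.inl (sub_eq_zero.1 h)
  · exact Or.inr (sub_eq_zero.1 h)

lemma add_one_root [CharP F 2] (y : F) : (y + 1) ^ 2 + (y + 1) = y ^ 2 + y := by
  have h2 : (2 : F) = 0 := CharTwo.two_eq_zero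
  linear_combination (y + 1) * h2

lemma index_range [Fintype F] [CharP F 2] : (artinSchreier F).range.index = 2 := by
  have hk : Nat.card (artinSchreier F).ker = 2 := by
    have : ((artinSchreier F).ker : Set F) = {0, 1} := by
      ext x
      simp only [SetLike.mem_coe, AddMonoidHom.mem_ker, artinSchreier_apply,
        Set.mem_insert_iff, Set.mem_singleton_iff]
      constructor
      · intro h
        simpa using eq_or_eq_add_one (x := x) (y := 0) (by simpa using h)
      · rintro (rfl | rfl)
        · simp
        · simpa using add_one_root (0 : F)
    rw [← SetLike.coe_sort_coe, this, Nat.card_coe_set_eq, Set.ncard_pair zero_ne_one]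
  have h1 := (artinSchreier F).ker.card_mul_index
  rw [AddSubgroup.index_ker, hk] at h1
  have h2 := (artinSchreier F).range.card_mul_index
  have h3 : 0 < Nat.card (artinSchreier F).range := Nat.card_pos
  rw [← h1, mul_comm] at h2
  exact Nat.eq_of_mul_eq_mul_right h3 h2

open Classical in
/-- The integer-valued additive character that is `1` on elements of the form `y² + y` and `-1` on
all others; it equals `(-1) ^ Tr c`. -/
noncomputable def chi [CharP F 2] (c : F) : ℤ := if c ∈ (artinSchreier F).range then 1 else -1

lemma chi_add [Fintype F] [CharP F 2] (x y : F) : chi (x + y) = chi x * chi y := by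
  have := AddSubgroup.add_mem_iff_of_index_two (index_range (F := F)) (a := x) (b := y)
  unfold chi
  by_cases hx : x ∈ (artinSchreier F).range <;> by_cases hy : y ∈ (artinSchreier F).range <;>
    simp [this, hx, hy]

lemma chi_artinSchreier [CharP F 2] (y : F) : chi (y ^ 2 + y) = 1 :=
  if_pos ⟨y, rfl⟩

lemma chi_zero [CharP F 2] : chi (0 : F) = 1 := by simpa using chi_artinSchreier (0 : F)

lemma chi_mul_self [CharP F 2] (x : F) : chi x * chi x = 1 := by
  unfold chi; split_ifs <;> rfl

lemma chi_sq [Fintype F] [CharP F 2] (x : F) : chi (x ^ 2) = chi x := by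
  have h := chi_artinSchreier x
  rw [chi_add] at h
  calc chi (x ^ 2) = chi (x ^ 2) * (chi x * chi x) := by rw [chi_mul_self, mul_one]
    _ = chi x := by rw [← mul_assoc, h, one_mul]

lemma sum_chi [Fintype F] [CharP F 2] : ∑ x : F, chi x = 0 := by
  obtain ⟨t, ht⟩ : ∃ t : F, t ∉ (artinSchreier F).range := by
    by_contra! h
    have := index_range (F := F)
    rw [(AddSubgroup.eq_top_iff' _).2 h, AddSubgroup.index_top] at this
    omega
  have h : ∑ x : F, chi (x + t) = ∑ x : F, chi x := Equiv.sum_comp (Equiv.addRight t) chi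
  have ht' : chi t = -1 := if_neg ht
  simp only [chi_add, ht', mul_neg, mul_one, sum_neg_distrib] at h
  omega

lemma sum_chi_mul [Fintype F] [DecidableEq F] [CharP F 2] (b : F) :
    ∑ x : F, chi (x * b) = if b = 0 then (Fintype.card F : ℤ) else 0 := by
  split_ifs with hb
  · simp [hb, chi_zero]
  · rw [← sum_chi (F := F)]
    exact Equiv.sum_comp (Equiv.mulRight₀ b hb) chi

lemma card_roots [Fintype F] [DecidableEq F] [CharP F 2] (c : F) :
    ((univ.filter fun u : F => u ^ 2 + u = c).card : ℤ) = 1 + chi c := by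
  unfold chi
  split_ifs with h
  · obtain ⟨y, hy⟩ := h
    rw [artinSchreier_apply] at hy
    have : (univ.filter fun u : F => u ^ 2 + u = c) = {y, y + 1} := by
      ext u
      simp only [mem_filter, mem_univ, true_and, mem_insert, mem_singleton]
      constructor
      · intro hu
        exact eq_or_eq_add_one (hu.trans hy.symm)
      · rintro (rfl | rfl)
        · exact hy
        · rw [add_one_root, hy]
    rw [this, card_pair (by simp)]
    norm_num
  · rw [filter_eq_empty_iff.2]
    · simp
    · intro u _ hu
      exact h ⟨u, hu⟩

/-! ### The point count and the square of the cubic sum -/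

/-- The cubic exponential sum `∑ x, χ(a x³)`. -/
noncomputable def cubicSum [Fintype F] [CharP F 2] (a : F) : ℤ := ∑ x : F, chi (a * x ^ 3)

lemma count_add_two [Fintype F] [DecidableEq F] [CharP F 2] {a : F} (ha : a ≠ 0) :
    ((univ.filter fun p : F × F => p.1 * p.2 * (p.1 + p.2) = a).card : ℤ) + 2
      = Fintype.card F + cubicSum a := by
  have h1 : (univ.filter fun p : F × F => p.1 * p.2 * (p.1 + p.2) = a).card
      = ∑ x : F, (univ.filter fun y : F => x * y * (x + y) = a).card := by
    simp only [card_filter]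
    rw [← univ_product_univ, sum_product]
  -- The inverse of `0` is `0`, so the term `x = 0` on the right is `1 + χ(0) = 2`.
  have h2 : ∀ x : F, ((univ.filter fun y : F => x * y * (x + y) = a).card : ℤ)
      + (if x = 0 then 2 else 0) = 1 + chi (a * x⁻¹ ^ 3) := by
    intro x
    split_ifs with hx
    · subst hx
      simp [chi_zero, ha.symm]
    · rw [← card_roots, add_zero, Nat.cast_inj]
      refine card_equiv (Equiv.mulRight₀ x⁻¹ (inv_ne_zero hx)) fun y => ?_
      simp only [mem_filter, mem_univ, true_and]
      change _ ↔ (y * x⁻¹) ^ 2 + y * x⁻¹ = _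
      constructor
      · rintro rfl
        field_simp
        ring
      · intro h
        field_simp at h
        linear_combination h
  have h3 : ∑ x : F, chi (a * x⁻¹ ^ 3) = cubicSum a :=
    Fintype.sum_bijective _ inv_involutive.bijective _ _ fun _ => rfl
  have h4 := sum_congr rfl fun x (_ : x ∈ (univ : Finset F)) => h2 x
  rw [sum_add_distrib, sum_add_distrib, h3, ← Nat.cast_sum, ← h1] at h4
  simpa using h4

/-- The radical computation: `w` runs over the differences `y - x` in the double sum for `S²`, and
`χ(a x² w + a x w²) = χ(x² (a w + a² w⁴))` because `χ` is invariant under squaring. -/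
lemma cubicSum_sq [Fintype F] [DecidableEq F] [CharP F 2] {a : F} (ha : a ≠ 0) :
    cubicSum a ^ 2 = Fintype.card F *
      (1 + (univ.filter fun w : F => a * w ^ 3 = 1).card * chi (1 : F)) := by
  have h2 : (2 : F) = 0 := CharTwo.two_eq_zero
  have e1 : ∀ w x : F, chi (a * x ^ 3) * chi (a * (x + w) ^ 3)
      = chi (a * w ^ 3) * chi (x ^ 2 * (a * w + a ^ 2 * w ^ 4)) := by
    intro w x
    have : a * x ^ 3 + a * (x + w) ^ 3 = a * w ^ 3 + (x ^ 2 * (a * w) + a * x * w ^ 2) := by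
      linear_combination (a * x ^ 3 + a * x ^ 2 * w + a * x * w ^ 2) * h2
    rw [← chi_add, this, chi_add, chi_add, ← chi_sq (a * x * w ^ 2), ← chi_add]
    ring_nf
  have e2 : ∀ w : F, ∑ x : F, chi (x ^ 2 * (a * w + a ^ 2 * w ^ 4))
      = if a * w + a ^ 2 * w ^ 4 = 0 then (Fintype.card F : ℤ) else 0 := by
    intro w
    rw [← sum_chi_mul]
    exact Fintype.sum_bijective (fun x : F => x ^ 2)
      (Finite.injective_iff_bijective.1 (fun x y h => CharTwo.sq_injective h)) _ _ fun _ => rfl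
  have e3 : ∀ w : F, a * w + a ^ 2 * w ^ 4 = 0 ↔ w = 0 ∨ a * w ^ 3 = 1 := by
    intro w
    have : a * w + a ^ 2 * w ^ 4 = a * (w * (a * w ^ 3 - 1)) := by
      linear_combination a * w * h2
    rw [this]
    simp [ha, sub_eq_zero]
  have e4 : ∀ w : F, chi (a * w ^ 3) *
      (if a * w + a ^ 2 * w ^ 4 = 0 then (Fintype.card F : ℤ) else 0)
      = (if w = 0 then (Fintype.card F : ℤ) else 0)
        + (if a * w ^ 3 = 1 then Fintype.card F * chi (1 : F) else 0) := by
    intro w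
    by_cases hw : w = 0
    · simp [hw, chi_zero]
    · by_cases hw' : a * w ^ 3 = 1
      · simp [e3, hw, hw', mul_comm]
      · simp [e3, hw, hw']
  calc cubicSum a ^ 2
      = ∑ x : F, ∑ y : F, chi (a * x ^ 3) * chi (a * y ^ 3) := by
        rw [sq, cubicSum, sum_mul_sum]
    _ = ∑ x : F, ∑ w : F, chi (a * x ^ 3) * chi (a * (x + w) ^ 3) := by
        refine sum_congr rfl fun x _ => ?_
        exact (Equiv.sum_comp (Equiv.addLeft x) fun y => chi (a * x ^ 3) * chi (a * y ^ 3)).symm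
    _ = ∑ w : F, chi (a * w ^ 3) * ∑ x : F, chi (x ^ 2 * (a * w + a ^ 2 * w ^ 4)) := by
        rw [sum_comm]
        simp only [e1, mul_sum]
    _ = _ := by
        simp only [e2, e4, sum_add_distrib, sum_ite_eq', mem_univ, if_true, ← sum_filter,
          sum_const, nsmul_eq_mul]
        ring

/-! ### Cube roots and the cubic sum modulo three -/

/-- In a field of `2 ^ m` elements, `m` even, there are primitive cube roots of unity. -/
lemma exists_omega [Fintype F] [CharP F 2] {m : ℕ} (hm : Even m) (hF : Fintype.card F = 2 ^ m) :
    ∃ ω : F, ω ^ 2 + ω = 1 := by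
  classical
  have h3 : 3 ∣ Fintype.card Fˣ := by
    rw [Fintype.card_units, hF]
    obtain ⟨k, rfl⟩ := hm
    rw [← two_mul, pow_mul]
    simpa using Nat.sub_dvd_pow_sub_pow 4 1 k
  obtain ⟨u, hu⟩ := exists_prime_orderOf_dvd_card 3 h3
  have hu3 : (u : F) ^ 3 = 1 := by
    rw [← Units.val_pow_eq_pow_val, ← hu, pow_orderOf_eq_one, Units.val_one]
  have hu1 : (u : F) ≠ 1 := by
    intro h
    rw [Units.val_eq_one] at h
    simp [h] at hu
  have : ((u : F) - 1) * ((u : F) ^ 2 + u + 1) = 0 := by linear_combination hu3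
  have := (mul_eq_zero.1 this).resolve_left (sub_ne_zero.2 hu1)
  have h2 : (2 : F) = 0 := CharTwo.two_eq_zero
  exact ⟨u, by linear_combination this - h2⟩

lemma card_cube_roots [Fintype F] [DecidableEq F] [CharP F 2] {ω : F} (hω : ω ^ 2 + ω = 1)
    {x : F} (hx : x ≠ 0) : (univ.filter fun y : F => y ^ 3 = x ^ 3).card = 3 := by
  have h2 : (2 : F) = 0 := CharTwo.two_eq_zero
  have hω0 : ω ≠ 0 := by rintro rfl; simp at hω
  have hω1 : ω ≠ 1 := by
    rintro rfl
    exact one_ne_zero (by linear_combination h2 - hω : (1 : F) = 0)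
  have hω3 : ω ^ 3 = 1 := by linear_combination (ω - 1) * hω + (ω - 1) * h2
  have : (univ.filter fun y : F => y ^ 3 = x ^ 3) = {x, ω * x, ω ^ 2 * x} := by
    ext y
    simp only [mem_filter, mem_univ, true_and, mem_insert, mem_singleton]
    constructor
    · intro h
      have : (y - x) * ((y - ω * x) * (y - ω ^ 2 * x)) = 0 := by
        linear_combination h - (y ^ 2 * x - y * x ^ 2) * (hω + h2)
          + (y * x ^ 2 - x ^ 3) * hω3
      simpa [sub_eq_zero] using this
    · rintro (rfl | rfl | rfl)
      · rfl
      · rw [mul_pow, hω3, one_mul]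
      · rw [mul_pow, ← pow_mul, mul_comm 2 3, pow_mul, hω3, one_pow, one_mul]
  rw [this, card_eq_three]
  refine ⟨x, ω * x, ω ^ 2 * x, ?_, ?_, ?_, rfl⟩
  · intro h
    exact hω1 (mul_right_cancel₀ hx (by rw [← h, one_mul]))
  · intro h
    have h1 : ω ^ 2 = 1 := mul_right_cancel₀ hx (by rw [← h, one_mul])
    exact hω0 (by linear_combination hω - h1)
  · intro h
    have h1 : ω * 1 = ω * ω := by
      rw [mul_one, ← sq]
      exact mul_right_cancel₀ hx h
    exact hω1 (mul_left_cancel₀ hω0 h1).symm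

/-- Only `x = 0` contributes modulo `3`: the other terms are grouped by the value of `x³`. -/
lemma cubicSum_mod_three [Fintype F] [CharP F 2] {ω : F} (hω : ω ^ 2 + ω = 1) (a : F) :
    cubicSum a ≡ 1 [ZMOD 3] := by
  classical
  have h : cubicSum a = 1 + ∑ x ∈ univ.erase (0 : F), chi (a * x ^ 3) := by
    rw [cubicSum, ← add_sum_erase _ _ (mem_univ (0 : F))]
    simp [chi_zero]
  have h3 : (3 : ℤ) ∣ ∑ x ∈ univ.erase (0 : F), chi (a * x ^ 3) := by
    rw [← sum_fiberwise_of_maps_to (g := fun x : F => x ^ 3) (t := (univ.erase 0).image (· ^ 3))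
      (fun x hx => mem_image_of_mem _ hx)]
    refine dvd_sum fun c hc => ?_
    obtain ⟨x, hx, rfl⟩ := mem_image.1 hc
    have hx0 : x ≠ 0 := (mem_erase.1 hx).1
    have hfib : ((univ.erase (0 : F)).filter fun y => y ^ 3 = x ^ 3)
        = univ.filter fun y : F => y ^ 3 = x ^ 3 := by
      ext y
      simp only [mem_filter, mem_erase, mem_univ, and_true, true_and, and_iff_right_iff_imp]
      rintro h rfl
      exact hx0 (by simpa using h.symm)
    rw [hfib, sum_congr rfl (g := fun _ => chi (a * x ^ 3))
      (fun y hy => by rw [(mem_filter.1 hy).2]), sum_const, card_cube_roots hω hx0]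
    simp
  rw [h]
  exact (Int.modEq_iff_dvd.2 (by simpa using h3)).symm

/-! ### Odd exponent -/

lemma cubicSum_of_odd [Fintype F] [CharP F 2] {m : ℕ} (hm : Odd m)
    (hF : Fintype.card F = 2 ^ m) {a : F} (ha : a ≠ 0) : cubicSum a = 0 := by
  classical
  -- An inverse of cubing is `z ↦ z ^ k`, where `3 k = 2 ^ (m + 1) - 1 = 2 (q - 1) + 1`.
  obtain ⟨k, hk⟩ : ∃ k, 3 * k + 1 = 2 * 2 ^ m := by
    obtain ⟨j, rfl⟩ := hm
    obtain ⟨k, hk⟩ : 3 ∣ 4 ^ (j + 1) - 1 := by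
      simpa using Nat.sub_dvd_pow_sub_pow 4 1 (j + 1)
    refine ⟨k, ?_⟩
    have : 0 < 4 ^ (j + 1) := by positivity
    have e : 2 * 2 ^ (2 * j + 1) = 4 ^ (j + 1) := by
      rw [show (4 : ℕ) = 2 ^ 2 by rfl, ← pow_mul]; ring
    rw [e]
    omega
  have hinv : ∀ x : F, (x ^ 3) ^ k = x := by
    intro x
    by_cases hx : x = 0
    · have : k ≠ 0 := by
        rintro rfl
        omega
      simp [hx, this]
    · refine mul_right_cancel₀ hx ?_
      rw [← pow_mul, ← pow_succ, hk, mul_comm, pow_mul, ← hF, FiniteField.pow_card, sq]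
  have hb : Function.Bijective fun x : F => x ^ 3 :=
    Finite.injective_iff_bijective.1 (Function.LeftInverse.injective (g := (· ^ k)) hinv)
  rw [cubicSum, Fintype.sum_bijective _ hb (fun x => chi (a * x ^ 3)) (fun y => chi (y * a))
    (fun x => by rw [mul_comm]), sum_chi_mul, if_neg ha]

end CubicCount

/-! ### The three counts -/

open CubicCount

/-- Let `q = 2^m`, `a ∈ 𝔽_q` with `a ≠ 0`, and
`N = |{(X, Y) ∈ 𝔽_q² : X·Y·(X + Y) = a}|`. Then:
(i) if `m` is odd, `N = q - 2`;
(ii) if `m ≡ 2 (mod 4)` and `a` is a cube in `𝔽_q^*`, then `N = q - 2 + 2·2^{m/2}`;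
(iii) if `m ≡ 0 (mod 4)` and `a` is not a cube in `𝔽_q^*`, then `N = q - 2 + 2^{m/2}`. -/
theorem count_XY_X_add_Y_char_two {F : Type*} [Field F] [Fintype F] [DecidableEq F]
    (q m : ℕ) (hq : q = Fintype.card F) (hqm : q = 2 ^ m) (a : F) (ha : a ≠ 0) :
    (Odd m →
      (Finset.univ.filter fun p : F × F => p.1 * p.2 * (p.1 + p.2) = a).card = q - 2) ∧
    (m % 4 = 2 → (∃ c : F, c ≠ 0 ∧ c ^ 3 = a) →
      (Finset.univ.filter fun p : F × F => p.1 * p.2 * (p.1 + p.2) = a).card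
        = q - 2 + 2 * 2 ^ (m / 2)) ∧
    (m % 4 = 0 → ¬ (∃ c : F, c ≠ 0 ∧ c ^ 3 = a) →
      (Finset.univ.filter fun p : F × F => p.1 * p.2 * (p.1 + p.2) = a).card
        = q - 2 + 2 ^ (m / 2)) := by
  have hF : Fintype.card F = 2 ^ m := hq.symm.trans hqm
  have hq2 : 2 ≤ q := hq ▸ Fintype.one_lt_card
  have : Fact (Nat.Prime 2) := ⟨Nat.prime_two⟩
  have : CharP F 2 := charP_of_card_eq_prime_pow hF
  have hN := count_add_two ha
  rw [← hq] at hN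
  have hS := cubicSum_sq ha
  refine ⟨fun hm => ?_, fun hm hc => ?_, fun hm hc => ?_⟩
  · rw [cubicSum_of_odd hm hF ha] at hN
    omega
  · obtain ⟨ω, hω⟩ := exists_omega (Nat.even_iff.2 (by omega)) hF
    have hmod := cubicSum_mod_three hω a
    have hchi : chi (1 : F) = 1 := hω ▸ chi_artinSchreier ω
    obtain ⟨c, hc0, rfl⟩ := hc
    have hw : (univ.filter fun w : F => c ^ 3 * w ^ 3 = 1).card = 3 := by
      refine Eq.trans ?_ (card_cube_roots hω (inv_ne_zero hc0))
      congr 1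
      ext w
      simp only [mem_filter, mem_univ, true_and]
      rw [inv_pow, ← mul_eq_one_iff_eq_inv₀ (pow_ne_zero 3 hc0), mul_comm]
    obtain ⟨k, rfl⟩ : ∃ k, m = 4 * k + 2 := ⟨m / 4, by omega⟩
    have hhalf : (4 * k + 2) / 2 = 2 * k + 1 := by omega
    have hr : ((2 : ℤ) ^ (2 * k + 1)) ≡ 2 [ZMOD 3] := by
      rw [pow_succ, pow_mul]
      simpa using ((show (2 ^ 2 : ℤ) ≡ 1 [ZMOD 3] by decide).pow k).mul_right 2
    rw [hw, hchi, hF] at hS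
    have hS' : cubicSum (c ^ 3) ^ 2 = (2 * 2 ^ (2 * k + 1)) ^ 2 := by
      rw [hS]; push_cast; ring
    rw [hhalf]
    zify [hq2]
    generalize (2 : ℤ) ^ (2 * k + 1) = r at *
    rw [Int.ModEq] at hr hmod
    rcases sq_eq_sq_iff_eq_or_eq_neg.1 hS' with h | h <;> omega
  · obtain ⟨ω, hω⟩ := exists_omega (Nat.even_iff.2 (by omega)) hF
    have hmod := cubicSum_mod_three hω a
    have hw : (univ.filter fun w : F => a * w ^ 3 = 1) = ∅ := by
      refine filter_eq_empty_iff.2 fun w _ h => hc ⟨w⁻¹, ?_, ?_⟩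
      · rintro h0
        simp [inv_eq_zero.1 h0] at h
      · rw [inv_pow]
        exact (eq_inv_of_mul_eq_one_left h).symm
    obtain ⟨k, rfl⟩ : ∃ k, m = 4 * k := ⟨m / 4, by omega⟩
    have hhalf : (4 * k) / 2 = 2 * k := by omega
    have hr : ((2 : ℤ) ^ (2 * k)) ≡ 1 [ZMOD 3] := by
      rw [pow_mul]
      simpa using (show (2 ^ 2 : ℤ) ≡ 1 [ZMOD 3] by decide).pow k
    rw [hw, hF] at hS
    have hS' : cubicSum a ^ 2 = (2 ^ (2 * k)) ^ 2 := by
      rw [hS]; push_cast; simp; ring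
    rw [hhalf]
    zify [hq2]
    generalize (2 : ℤ) ^ (2 * k) = r at *
    rw [Int.ModEq] at hr hmod
    rcases sq_eq_sq_iff_eq_or_eq_neg.1 hS' with h | h <;> omega
end
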